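/- For every n ≥ 1, the number of labeled planar binary trees with n leaves avoiding the single pattern y(*, x(*,*)) equals (1/n)·binom(3n − 2, n − 1) = (3n − 2)!/(n!·(2n − 1)!). -/

import Mathlib

/-- Planar binary trees with internal vertices labeled by one of two symbols `x`, `y`. -/
inductive LTree : Type
  | leaf : LTree
  | x : LTree → LTree → LTree
  | y : LTree → LTree → LTree

namespace LTree

/-- Number of leaves. -/
def leaves : LTree → ℕ
  | leaf => 1
  | x u v => u.leaves + v.leaves
  | y u v => u.leaves + v.leaves

/-- The subtree relation. -/
inductive Subtree : LTree → LTree → Prop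
  | refl (t : LTree) : Subtree t t
  | xl {s u v : LTree} : Subtree s u → Subtree s (x u v)
  | xr {s u v : LTree} : Subtree s v → Subtree s (x u v)
  | yl {s u v : LTree} : Subtree s u → Subtree s (y u v)
  | yr {s u v : LTree} : Subtree s v → Subtree s (y u v)

/-- A tree matches (at the root) the single forbidden pattern `y(*, x(*,*))`
of the L-operad of Leroux. -/
def IsBadL : LTree → Prop
  | y _ (x _ _) => True
  | _ => False

/-- A tree avoids the single pattern `y(*, x(*,*))`. -/
def AvoidsL (t : LTree) : Prop := ∀ s : LTree, Subtree s t → ¬ IsBadL s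

end LTree

/-!
Let `A` and `B` be the generating functions, by number of leaves, of the avoiding trees and of the
avoiding trees whose root is not labeled `x`. Cutting at the root gives `A = B + A²` and
`B = X + A B`, hence `A (1 - A)² = X`. Lagrange inversion then yields the coefficients of `A`; in
this case it reduces to a recursion for the powers of `H = (1 - A)⁻¹ = 1 + X H³` that matches
Pascal's rule.
-/

open Finset.HasAntidiagonal (antidiagonal mem_antidiagonal)
open PowerSeries

theorem succ_mul_choose_succ_add_choose {N q m r : ℕ} (hN : N = q * (m + 1) + r) :
    (N + 1) * (r * N.choose (m + 1) + (r + q) * N.choose m) =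
      N * ((r + 1) * (N + 1).choose (m + 1)) := by
  have hpascal : (N + 1).choose (m + 1) = N.choose m + N.choose (m + 1) := Nat.choose_succ_succ' N m
  have habsorb : (N + 1) * N.choose m = (N + 1).choose (m + 1) * (m + 1) :=
    Nat.add_one_mul_choose_eq N m
  calc (N + 1) * (r * N.choose (m + 1) + (r + q) * N.choose m)
    _ = (N + 1) * r * (N.choose m + N.choose (m + 1)) + q * ((N + 1) * N.choose m) := by ring
    _ = ((N + 1) * r + q * (m + 1)) * (N + 1).choose (m + 1) := by
      rw [← hpascal, habsorb]; ring
    _ = N * ((r + 1) * (N + 1).choose (m + 1)) := by rw [hN]; ring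

section FussCatalan

variable {R : Type*} [CommRing R] [IsDomain R] [CharZero R]

/- Multiplying out `q * m + r` keeps the formula valid at `m = r = 0`. The recursion
`H ^ (r + 1) = H ^ r + X * H ^ (r + q)` on the left matches Pascal's rule on the right. -/
theorem mul_coeff_pow_of_eq_one_add_X_mul_pow {q : ℕ} (hq : 0 < q) {H : R⟦X⟧}
    (hH : H = 1 + X * H ^ q) (m r : ℕ) :
    ((q * m + r : ℕ) : R) * coeff m (H ^ r) = (r * (q * m + r).choose m : ℕ) := by
  induction m generalizing r with
  | zero =>
    have hH₀ : constantCoeff H = 1 := by rw [hH]; simp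
    simp [hH₀]
  | succ m ihm =>
    induction r with
    | zero => simp
    | succ r ihr =>
      have hrec : H ^ (r + 1) = H ^ r + X * H ^ (r + q) := by
        linear_combination H ^ r * hH
      have hshift := ihm (r + q)
      rw [show q * m + (r + q) = q * (m + 1) + r by ring] at hshift
      rw [← add_assoc, hrec, map_add, coeff_succ_X_mul]
      generalize hN : q * (m + 1) + r = N at *
      have hN₀ : (N : R) ≠ 0 := Nat.cast_ne_zero.mpr (by rw [← hN]; positivity)
      have hchoose := congrArg (Nat.cast : ℕ → R) (succ_mul_choose_succ_add_choose hN.symm)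
      push_cast at hshift ihr hchoose ⊢
      refine mul_left_cancel₀ hN₀ ?_
      linear_combination (N + 1 : R) * (ihr + hshift) + hchoose

theorem succ_mul_coeff_succ_of_mul_one_sub_pow_eq_X {f : R⟦X⟧} {p : ℕ}
    (hf₀ : constantCoeff f = 0) (hf : f * (1 - f) ^ (p + 1) = X) (m : ℕ) :
    (m + 1 : R) * coeff (m + 1) f = ((p + 2) * m + p).choose m := by
  have hunit : IsUnit (1 - f) := isUnit_iff_constantCoeff.mpr (by simp [hf₀])
  obtain ⟨H, hH⟩ := hunit.exists_right_inv
  have hfH : f = X * H ^ (p + 1) := by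
    rw [← hf, mul_assoc, ← mul_pow, hH, one_pow, mul_one]
  have hH' : H = 1 + X * H ^ (p + 2) := by
    linear_combination hH + H * hfH
  have hcoeff := mul_coeff_pow_of_eq_one_add_X_mul_pow (Nat.succ_pos _) hH' m (p + 1)
  rw [← coeff_succ_X_mul, ← hfH, ← add_assoc] at hcoeff
  have hchoose : (((p + 2) * m + p).choose m : R) * ((p + 2) * m + p + 1 : ℕ) =
      ((p + 2) * m + p + 1).choose m * ((p + 1) * (m + 1)) := by
    have hsub : (p + 2) * m + p + 1 - m = (p + 1) * (m + 1) :=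
      Nat.sub_eq_of_eq_add (by ring)
    exact_mod_cast hsub ▸ Nat.choose_mul_succ_eq ((p + 2) * m + p) m
  refine mul_left_cancel₀ (Nat.cast_ne_zero.mpr ((p + 2) * m + p).succ_ne_zero) ?_
  push_cast at hcoeff hchoose ⊢
  linear_combination (m + 1 : R) * hcoeff - hchoose

end FussCatalan

section CountingSeries

variable {R : Type*} [Semiring R] {α β γ : Type*}

variable (R) in
/-- The ordinary generating function of a set `S` of objects with respect to a size function. Its
coefficients are only meaningful when there are finitely many objects of each size, since
`Set.ncard` vanishes on infinite sets. -/
noncomputable def countingSeries (size : α → ℕ) (S : Set α) : R⟦X⟧ :=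
  mk fun n => ({a ∈ S | size a = n}.ncard : R)

theorem coeff_countingSeries (size : α → ℕ) (S : Set α) (n : ℕ) :
    coeff n (countingSeries R size S) = ({a ∈ S | size a = n}.ncard : R) :=
  coeff_mk _ _

theorem constantCoeff_countingSeries {size : α → ℕ} (hsize : ∀ a, 0 < size a) (S : Set α) :
    constantCoeff (countingSeries R size S) = 0 := by
  rw [← coeff_zero_eq_constantCoeff_apply, coeff_countingSeries]
  simp [(hsize _).ne']

theorem countingSeries_singleton (size : α → ℕ) (a : α) :
    countingSeries R size {a} = X ^ size a := by
  ext n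
  rw [coeff_countingSeries, coeff_X_pow]
  split_ifs with h
  · have hfib : {b ∈ ({a} : Set α) | size b = n} = {a} := by ext b; simp +contextual [h]
    rw [hfib, Set.ncard_singleton, Nat.cast_one]
  · have hfib : {b ∈ ({a} : Set α) | size b = n} = ∅ := by ext b; simp +contextual [Ne.symm h]
    rw [hfib, Set.ncard_empty, Nat.cast_zero]

theorem countingSeries_union {size : α → ℕ} (hsize : ∀ n, {a | size a = n}.Finite) {S T : Set α}
    (hST : Disjoint S T) :
    countingSeries R size (S ∪ T) = countingSeries R size S + countingSeries R size T := by
  ext n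
  simp only [map_add, coeff_countingSeries]
  have hfin (U : Set α) : {a ∈ U | size a = n}.Finite := (hsize n).subset fun _ h => h.2
  have hdisj : Disjoint {a ∈ S | size a = n} {a ∈ T | size a = n} :=
    hST.mono (Set.sep_subset _ _) (Set.sep_subset _ _)
  have hfib : {a ∈ S ∪ T | size a = n} = {a ∈ S | size a = n} ∪ {a ∈ T | size a = n} :=
    Set.union_inter_distrib_right _ _ _
  rw [hfib, Set.ncard_union_eq hdisj (hfin S) (hfin T), Nat.cast_add]

theorem ncard_image2_of_injective2 {f : α → β → γ} (hf : Function.Injective2 f) (S : Set α)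
    (T : Set β) : (Set.image2 f S T).ncard = S.ncard * T.ncard := by
  rw [← Set.image_uncurry_prod, Set.ncard_image_of_injective _ hf.uncurry, Set.ncard_prod]

theorem countingSeries_image2 {f : α → β → γ} (hf : Function.Injective2 f) {sizeα : α → ℕ}
    {sizeβ : β → ℕ} {sizeγ : γ → ℕ} (hα : ∀ n, {a | sizeα a = n}.Finite)
    (hβ : ∀ n, {b | sizeβ b = n}.Finite) (hsize : ∀ a b, sizeγ (f a b) = sizeα a + sizeβ b)
    (S : Set α) (T : Set β) :
    countingSeries R sizeγ (Set.image2 f S T) =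
      countingSeries R sizeα S * countingSeries R sizeβ T := by
  ext n
  let F (p : ℕ × ℕ) : Set γ := Set.image2 f {a ∈ S | sizeα a = p.1} {b ∈ T | sizeβ b = p.2}
  have hfib : {c ∈ Set.image2 f S T | sizeγ c = n} =
      ⋃ p ∈ (antidiagonal n : Set (ℕ × ℕ)), F p := by
    ext c
    simp only [Set.mem_sep_iff, Set.mem_image2, Set.mem_iUnion, SetLike.mem_coe, mem_antidiagonal,
      F]
    constructor
    · rintro ⟨⟨a, ha, b, hb, rfl⟩, hn⟩
      exact ⟨(sizeα a, sizeβ b), (hsize a b).symm.trans hn, a, ⟨ha, rfl⟩, b, ⟨hb, rfl⟩, rfl⟩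
    · rintro ⟨p, hp, a, ⟨ha, hap⟩, b, ⟨hb, hbp⟩, rfl⟩
      exact ⟨⟨a, ha, b, hb, rfl⟩, by rw [hsize, hap, hbp, hp]⟩
  have hfin (p : ℕ × ℕ) : (F p).Finite :=
    ((hα p.1).subset fun _ h => h.2).image2 f ((hβ p.2).subset fun _ h => h.2)
  have hdisj : (antidiagonal n : Set (ℕ × ℕ)).PairwiseDisjoint F := by
    refine fun p _ p' _ hpp' => Set.disjoint_left.mpr ?_
    rintro _ ⟨a, ⟨-, ha⟩, b, ⟨-, hb⟩, rfl⟩ ⟨a', ⟨-, ha'⟩, b', ⟨-, hb'⟩, heq⟩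
    obtain ⟨rfl, rfl⟩ := hf heq
    exact hpp' (Prod.ext (ha.symm.trans ha') (hb.symm.trans hb'))
  rw [coeff_countingSeries, hfib,
    (antidiagonal n).finite_toSet.ncard_biUnion (fun p _ => hfin p) hdisj, finsum_mem_coe_finset]
  simp only [F, ncard_image2_of_injective2 hf, coeff_mul, coeff_countingSeries, Nat.cast_sum,
    Nat.cast_mul]

end CountingSeries

namespace LTree

theorem avoidsL_leaf : AvoidsL leaf := by
  rintro _ ⟨⟩
  exact id

theorem avoidsL_x {u v : LTree} : AvoidsL (x u v) ↔ AvoidsL u ∧ AvoidsL v := by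
  refine ⟨fun h => ⟨fun s hs => h s (.xl hs), fun s hs => h s (.xr hs)⟩, ?_⟩
  rintro ⟨hu, hv⟩ s (_ | hs | hs)
  · exact id
  · exact hu s hs
  · exact hv s hs

theorem isBadL_y {u v : LTree} : IsBadL (y u v) ↔ ∃ a b, v = x a b := by
  cases v <;> simp [IsBadL]

theorem avoidsL_y {u v : LTree} :
    AvoidsL (y u v) ↔ AvoidsL u ∧ AvoidsL v ∧ ∀ a b, v ≠ x a b := by
  have hroot_iff : ¬ IsBadL (y u v) ↔ ∀ a b, v ≠ x a b := by simp [isBadL_y]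
  rw [← hroot_iff]
  refine ⟨fun h => ⟨fun s hs => h s (.yl hs), fun s hs => h s (.yr hs), h _ (.refl _)⟩, ?_⟩
  rintro ⟨hu, hv, hroot⟩ s (_ | _ | _ | hs | hs)
  · exact hroot
  · exact hu s hs
  · exact hv s hs

theorem x_injective2 : Function.Injective2 x := fun _ _ _ _ => x.inj

theorem y_injective2 : Function.Injective2 y := fun _ _ _ _ => y.inj

theorem leaves_pos (t : LTree) : 0 < t.leaves := by
  induction t <;> simp only [leaves] <;> omega

theorem finite_setOf_leaves_le (n : ℕ) : {t : LTree | t.leaves ≤ n}.Finite := by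
  induction n with
  | zero => simp [(leaves_pos _).ne']
  | succ n ih =>
    refine ((Set.finite_singleton leaf).union ((ih.image2 x ih).union (ih.image2 y ih))).subset ?_
    rintro (_ | ⟨u, v⟩ | ⟨u, v⟩) ht
    · simp
    all_goals
      have := leaves_pos u
      have := leaves_pos v
      change u.leaves + v.leaves ≤ n + 1 at ht
      have hu : u.leaves ≤ n := by omega
      have hv : v.leaves ≤ n := by omega
      simp [hu, hv]

theorem finite_setOf_leaves_eq (n : ℕ) : {t : LTree | t.leaves = n}.Finite :=
  (finite_setOf_leaves_le n).subset fun _ h => h.le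

/-- The avoiding trees whose root is not labeled `x`, which are those that may occur as the right
subtree of a vertex labeled `y`. -/
def avoidingNotX : Set LTree := {t | AvoidsL t ∧ ∀ u v, t ≠ x u v}

theorem setOf_avoidsL_eq_union :
    {t | AvoidsL t} = avoidingNotX ∪ Set.image2 x {t | AvoidsL t} {t | AvoidsL t} := by
  ext (_ | ⟨u, v⟩ | ⟨u, v⟩) <;> simp [avoidingNotX, avoidsL_x]

theorem avoidingNotX_eq_union :
    avoidingNotX = {leaf} ∪ Set.image2 y {t | AvoidsL t} avoidingNotX := by
  ext (_ | ⟨u, v⟩ | ⟨u, v⟩) <;> simp [avoidingNotX, avoidsL_leaf, avoidsL_y]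

variable (R : Type*)

theorem countingSeries_avoidsL_eq_add [Semiring R] :
    countingSeries R leaves {t | AvoidsL t} = countingSeries R leaves avoidingNotX +
      countingSeries R leaves {t | AvoidsL t} * countingSeries R leaves {t | AvoidsL t} := by
  have hdisj : Disjoint avoidingNotX (Set.image2 x {t | AvoidsL t} {t | AvoidsL t}) := by
    refine Set.disjoint_left.mpr ?_
    rintro _ ⟨-, hroot⟩ ⟨u, -, v, -, rfl⟩
    exact hroot u v rfl
  conv_lhs => rw [setOf_avoidsL_eq_union]
  rw [countingSeries_union finite_setOf_leaves_eq hdisj, countingSeries_image2 x_injective2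
    finite_setOf_leaves_eq finite_setOf_leaves_eq fun _ _ => rfl]

theorem countingSeries_avoidingNotX_eq_add [Semiring R] :
    countingSeries R leaves avoidingNotX =
      X + countingSeries R leaves {t | AvoidsL t} * countingSeries R leaves avoidingNotX := by
  have hdisj : Disjoint {leaf} (Set.image2 y {t | AvoidsL t} avoidingNotX) := by simp
  conv_lhs => rw [avoidingNotX_eq_union]
  rw [countingSeries_union finite_setOf_leaves_eq hdisj, countingSeries_singleton, leaves, pow_one,
    countingSeries_image2 y_injective2 finite_setOf_leaves_eq finite_setOf_leaves_eq fun _ _ => rfl]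

theorem countingSeries_avoidsL_mul_one_sub_sq [CommRing R] :
    countingSeries R leaves {t | AvoidsL t} * (1 - countingSeries R leaves {t | AvoidsL t}) ^ 2 =
      X := by
  linear_combination (1 - countingSeries R leaves {t | AvoidsL t}) *
    countingSeries_avoidsL_eq_add R + countingSeries_avoidingNotX_eq_add R

theorem succ_mul_card_avoidsL (m : ℕ) :
    (m + 1) * Nat.card {t : LTree // t.leaves = m + 1 ∧ AvoidsL t} = (3 * m + 1).choose m := by
  have hcoeff := succ_mul_coeff_succ_of_mul_one_sub_pow_eq_X (p := 1)
    (constantCoeff_countingSeries leaves_pos _) (countingSeries_avoidsL_mul_one_sub_sq ℤ) m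
  have hcard : Nat.card {t : LTree // t.leaves = m + 1 ∧ AvoidsL t} =
      {t ∈ {t | AvoidsL t} | t.leaves = m + 1}.ncard :=
    Nat.card_congr (Equiv.subtypeEquivRight fun _ => and_comm)
  rw [coeff_countingSeries, ← hcard] at hcoeff
  exact_mod_cast hcoeff

end LTree

open LTree in
/-- For every `n ≥ 1`, the number of labeled planar binary trees with `n` leaves
avoiding the single pattern `y(*, x(*,*))` (the dimension of the `n`-th component of
the L-operad of Leroux) equals `(1/n)·C(3n-2, n-1) = (3n-2)! / (n! (2n-1)!)`;
in particular `n` divides `C(3n-2, n-1)`. -/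
theorem L_operad_dim :
    ∀ n : ℕ, 1 ≤ n →
      n ∣ (3 * n - 2).choose (n - 1) ∧
      Nat.card {t : LTree // t.leaves = n ∧ AvoidsL t} =
        (3 * n - 2).choose (n - 1) / n := by
  intro n hn
  obtain ⟨m, rfl⟩ := Nat.exists_eq_add_of_le' hn
  rw [show 3 * (m + 1) - 2 = 3 * m + 1 by omega, Nat.add_sub_cancel, ← succ_mul_card_avoidsL]
  exact ⟨Nat.dvd_mul_right _ _, (Nat.mul_div_cancel_left _ m.succ_pos).symm⟩
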